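/- For all integers k,d ≥ 1 and n ≥ 0, the number C^d_{k,n} equals both: (1) the number of binary trees with n internal nodes that avoid comb_k^1 at every left depth at least d−1, and (2) the number of Dyck paths of length 2n that avoid DU^k at every height at least d. -/

import Mathlib

/-- Full binary trees (every internal node has exactly two children). -/
inductive BTree : Type
  | leaf : BTree
  | node : BTree → BTree → BTree
deriving DecidableEq

namespace BTree

/-- Number of leaves of a full binary tree. -/
def numLeaves : BTree → ℕ
  | leaf => 1
  | node l r => l.numLeaves + r.numLeaves

/-- The list of pairs (left depth, right depth) of the leaves, in preorder. -/
def leafDepths : BTree → List (ℕ × ℕ)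
  | leaf => [(0, 0)]
  | node l r =>
      (l.leafDepths.map fun p => (p.1 + 1, p.2)) ++ (r.leafDepths.map fun p => (p.1, p.2 + 1))

/-- The left depth sequence `ld(t)` of the leaves of `t`, in preorder. -/
def ld (t : BTree) : List ℕ := t.leafDepths.map Prod.fst

/-- The right depth sequence `rd(t)` of the leaves of `t`, in preorder. -/
def rd (t : BTree) : List ℕ := t.leafDepths.map Prod.snd

end BTree

/-- `b ~^d c` : the sequences have equal length and agree at every position where
either entry is `< d`. -/
def DepthEq (d : ℕ) : List ℕ → List ℕ → Prop :=
  List.Forall₂ (fun a b => min a b < d → a = b)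

/-- `b ~_k c` : entrywise congruence mod `k` (and equal length). -/
def ModListEq (k : ℕ) : List ℕ → List ℕ → Prop :=
  List.Forall₂ (fun a b => a % k = b % k)

/-- The relation `t ~ t'` iff `ld(t) ~^d ld(t')` and `rd(t) ~^e rd(t')`. -/
def DeRel (d e : ℕ) (t t' : BTree) : Prop :=
  DepthEq d t.ld t'.ld ∧ DepthEq e t.rd t'.rd

/-- The relation `t ~ t'` iff `ld(t) ~_k^d ld(t')` (i.e. `ld(t) ~_k ld(t')` and
`ld(t) ~^d ld(t')`). -/
def DkRel (d k : ℕ) (t t' : BTree) : Prop :=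
  ModListEq k t.ld t'.ld ∧ DepthEq d t.ld t'.ld

/-- `T_n`: full binary trees with `n+1` leaves. -/
def Tn (n : ℕ) : Type := {t : BTree // t.numLeaves = n + 1}

/-- `C^{d,e}_n`: the number of equivalence classes of the relation `DeRel d e` on `T_n`. -/
noncomputable def Cde (d e n : ℕ) : ℕ :=
  Nat.card (Quot (fun t t' : Tn n => DeRel d e t.1 t'.1))

/-- `C^d_{k,n}`: the number of equivalence classes of `ld(t) ~_k^d ld(t')` on `T_n`. -/
noncomputable def Cdk (d k n : ℕ) : ℕ :=
  Nat.card (Quot (fun t t' : Tn n => DkRel d k t.1 t'.1))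

/-- Directions to a left or right child. -/
inductive Dir : Type
  | L : Dir
  | R : Dir
deriving DecidableEq

/-- The maximal subtree rooted at the node at position `p` (if such a node exists). -/
def subtreeAt : BTree → List Dir → Option BTree
  | t, [] => some t
  | BTree.leaf, _ :: _ => none
  | BTree.node l _, Dir.L :: p => subtreeAt l p
  | BTree.node _ r, Dir.R :: p => subtreeAt r p

/-- Replace the maximal subtree rooted at position `p` by `s` (if the position exists). -/
def replaceAt : BTree → List Dir → BTree → Option BTree
  | _, [], s => some s
  | BTree.leaf, _ :: _, _ => none
  | BTree.node l r, Dir.L :: p, s => (replaceAt l p s).map fun l' => BTree.node l' r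
  | BTree.node l r, Dir.R :: p, s => (replaceAt r p s).map fun r' => BTree.node l r'

/-- `leftAssoc t₀ [t₁,…,t_m] = t₀ ∧ t₁ ∧ ⋯ ∧ t_m` with `∧` performed left to right. -/
def leftAssoc : BTree → List BTree → BTree := List.foldl BTree.node

/-- `t'` is obtained from `t` by a right `k`-rotation at the node at position `p`:
the maximal subtree `t₀ ∧ t₁ ∧ ⋯ ∧ t_{k+1}` rooted there (with `∧` performed left to
right) is replaced by `t₀ ∧ (t₁ ∧ ⋯ ∧ t_{k+1})`.  The left depth of that node is
`p.count Dir.L`. -/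
def IsRightKRot (k : ℕ) (p : List Dir) (t t' : BTree) : Prop :=
  ∃ (t₀ t₁ : BTree) (rest : List BTree), rest.length = k ∧
    subtreeAt t p = some (leftAssoc t₀ (t₁ :: rest)) ∧
    replaceAt t p (BTree.node t₀ (leftAssoc t₁ rest)) = some t'

/-- `IsTopOf s u`: `s` is a subtree of `u` rooted at the root of `u`. -/
def IsTopOf : BTree → BTree → Prop
  | BTree.leaf, _ => True
  | BTree.node l r, BTree.node l' r' => IsTopOf l l' ∧ IsTopOf r r'
  | BTree.node _ _, BTree.leaf => False

/-- `t` contains `s` at left depth `δ`: `t` has a subtree equal to `s` rooted at a node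
of left depth `δ`. -/
def ContainsAt (t s : BTree) (δ : ℕ) : Prop :=
  ∃ (p : List Dir) (u : BTree), subtreeAt t p = some u ∧ p.count Dir.L = δ ∧ IsTopOf s u

/-- `t` avoids `s` at left depth `δ`. -/
def AvoidsAt (t s : BTree) (δ : ℕ) : Prop := ¬ ContainsAt t s δ

/-- `comb_k`: the left-to-right `∧`-product of `k+1` single leaves. -/
def comb (k : ℕ) : BTree := leftAssoc BTree.leaf (List.replicate k BTree.leaf)

/-- `comb_k^1 := t₀ ∧ comb_k` with `t₀` a single leaf. -/
def comb1 (k : ℕ) : BTree := BTree.node BTree.leaf (comb k)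

/-- One left `k`-rotation step, at a node of left depth at least `d-1`, from `t` to `t'`. -/
def LeftRotStep (d k : ℕ) (t t' : BTree) : Prop :=
  ∃ p : List Dir, d - 1 ≤ p.count Dir.L ∧ IsRightKRot k p t' t

/-- The `(d;k)`-order: `s ≤ t` iff `s` is obtained from `t` by finitely many left
`k`-rotations at nodes of left depth at least `d-1`. -/
def dkLE (d k : ℕ) (s t : BTree) : Prop := Relation.ReflTransGen (LeftRotStep d k) t s

/-- `t` is `(d;k)`-minimal. -/
def dkMinimal (d k : ℕ) (t : BTree) : Prop := ∀ s, dkLE d k s t → s = t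

/-- `t` is `(d;k)`-maximal. -/
def dkMaximal (d k : ℕ) (t : BTree) : Prop := ∀ s, dkLE d k t s → s = t

/-- Steps of a lattice path: `U = (1,1)` and `D = (1,-1)`. -/
inductive Step : Type
  | U : Step
  | D : Step
deriving DecidableEq

/-- A Dyck path of length `2n`: `n` up-steps, `n` down-steps, and every prefix has at
least as many `U`s as `D`s. -/
def IsDyck (n : ℕ) (w : List Step) : Prop :=
  w.count Step.U = n ∧ w.count Step.D = n ∧
    ∀ p : List Step, p <+: w → p.count Step.D ≤ p.count Step.U

/-- `w` avoids `DU^k` at every height at least `d`: any occurrence of a consecutive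
subpath `D U^k` starts at a height `< d`. -/
def AvoidsDUk (k d : ℕ) (w : List Step) : Prop :=
  ∀ l₁ l₂ : List Step, w = l₁ ++ Step.D :: (List.replicate k Step.U ++ l₂) →
    (l₁.count Step.U : ℤ) - (l₁.count Step.D : ℤ) < (d : ℤ)

/-! ### Auxiliary development: left depth sequences as lists -/

/-- Valid left depth sequences. -/
def Valid : List ℕ → Prop
  | [] => False
  | [a] => a = 0
  | a :: b :: r => 1 ≤ a ∧ a ≤ b + 1 ∧ Valid (b :: r)

/-- Avoidance condition on left depth sequences. -/
def AvL (k d : ℕ) : List ℕ → Prop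
  | [] => True
  | [_] => True
  | a :: b :: r => (d ≤ a → b + 1 < a + k) ∧ AvL k d (b :: r)

theorem ld_leaf : BTree.leaf.ld = [0] := rfl

theorem ld_node (l r : BTree) : (BTree.node l r).ld = l.ld.map (· + 1) ++ r.ld := by
  simp [BTree.ld, BTree.leafDepths, Function.comp_def]

theorem valid_append : ∀ (l r : List ℕ), Valid l → Valid r → Valid (l.map (· + 1) ++ r)
  | [], _, h, _ => h.elim
  | [a], [], _, h => h.elim
  | [a], b :: r, h, h' => by
      simp only [Valid] at h
      subst h
      simp [Valid, h']
  | a :: b :: l, r, h, h' => by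
      have ih := valid_append (b :: l) r h.2.2 h'
      have h1 := h.1
      have h2 := h.2.1
      simp only [List.map_cons, List.cons_append, Valid] at ih ⊢
      exact ⟨by omega, by omega, ih⟩

theorem valid_ld : ∀ t : BTree, Valid t.ld
  | .leaf => rfl
  | .node l r => by
      rw [ld_node]
      exact valid_append _ _ (valid_ld l) (valid_ld r)

theorem length_ld : ∀ t : BTree, t.ld.length = t.numLeaves
  | .leaf => rfl
  | .node l r => by
      rw [ld_node]
      simp [BTree.numLeaves, length_ld l, length_ld r]

theorem front_unique : ∀ (l l' r r' : List ℕ), Valid l → Valid l' →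
    l.map (· + 1) ++ r = l'.map (· + 1) ++ r' → l = l' ∧ r = r'
  | [], _, _, _, h, _, _ => h.elim
  | _ :: _, [], _, _, _, h, _ => h.elim
  | [a], [b], r, r', h, h', he => by simpa using he
  | [a], b :: c :: l, r, r', h, h', he => by
      simp only [Valid] at h h'
      simp at he
      omega
  | b :: c :: l, [a], r, r', h, h', he => by
      simp only [Valid] at h h'
      simp at he
      omega
  | a :: b :: l, a' :: b' :: l', r, r', h, h', he => by
      have he2 : (b :: l).map (· + 1) ++ r = (b' :: l').map (· + 1) ++ r' := by
        simp only [List.map_cons, List.cons_append, List.cons.injEq] at he ⊢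
        exact he.2
      have ih := front_unique (b :: l) (b' :: l') r r' h.2.2 h'.2.2 he2
      have ha : a = a' := by
        simp only [List.map_cons, List.cons_append, List.cons.injEq] at he
        omega
      rw [ha, ih.1]
      exact ⟨rfl, ih.2⟩

theorem ld_injective : ∀ t t' : BTree, t.ld = t'.ld → t = t'
  | .leaf, .leaf, _ => rfl
  | .leaf, .node l r, h => by
      have h1 := valid_ld l
      have h2 := valid_ld r
      rw [ld_node, ld_leaf] at h
      cases hl : l.ld with
      | nil => rw [hl] at h1; exact h1.elim
      | cons a s => rw [hl] at h; simp at h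
  | .node l r, .leaf, h => by
      have h1 := valid_ld l
      have h2 := valid_ld r
      rw [ld_node, ld_leaf] at h
      cases hl : l.ld with
      | nil => rw [hl] at h1; exact h1.elim
      | cons a s => rw [hl] at h; simp at h
  | .node l r, .node l' r', h => by
      rw [ld_node, ld_node] at h
      have := front_unique _ _ _ _ (valid_ld l) (valid_ld l') h
      rw [ld_injective l l' this.1, ld_injective r r' this.2]

theorem valid_split : ∀ (a : ℕ) (s : List ℕ), Valid (a :: s) → 1 ≤ a →
    ∃ l r, Valid l ∧ Valid r ∧ a :: s = l.map (· + 1) ++ r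
  | a, [], h, h1 => by
      simp only [Valid] at h
      omega
  | a, b :: s, h, h1 => by
      by_cases ha : a = 1
      · exact ⟨[0], b :: s, rfl, h.2.2, by simp [ha]⟩
      · have h2 := h.2.1
        obtain ⟨l, r, hl, hr, he⟩ := valid_split b s h.2.2 (by omega)
        cases l with
        | nil => exact hl.elim
        | cons c l =>
          simp only [List.map_cons, List.cons_append, List.cons.injEq] at he
          refine ⟨(a - 1) :: c :: l, r, ⟨by omega, by omega, hl⟩, hr, ?_⟩
          simp only [List.map_cons, List.cons_append, List.cons.injEq]
          exact ⟨by omega, he⟩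

theorem ld_surj : ∀ (n : ℕ) (L : List ℕ), L.length ≤ n → Valid L → ∃ t : BTree, t.ld = L
  | 0, [], _, h => h.elim
  | 0, _ :: _, hn, _ => by simp at hn
  | _ + 1, [], _, h => h.elim
  | n + 1, a :: s, hn, h => by
      by_cases ha : a = 0
      · cases s with
        | nil => exact ⟨.leaf, by rw [ha]; rfl⟩
        | cons b s =>
          have := h.1
          omega
      · obtain ⟨l, r, hl, hr, he⟩ := valid_split a s h (by omega)
        have hlen : l.length + r.length ≤ n + 1 := by
          have := congrArg List.length he
          simp at this hn
          omega
        have l0 : 0 < l.length := by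
          cases l with
          | nil => exact hl.elim
          | cons => simp
        have r0 : 0 < r.length := by
          cases r with
          | nil => exact hr.elim
          | cons => simp
        obtain ⟨tl, htl⟩ := ld_surj n l (by omega) hl
        obtain ⟨tr, htr⟩ := ld_surj n r (by omega) hr
        exact ⟨.node tl tr, by rw [ld_node, htl, htr, he]⟩

/-! ### Avoidance of combs -/

theorem comb_zero : comb 0 = .leaf := rfl

theorem comb_succ (k : ℕ) : comb (k + 1) = .node (comb k) .leaf := by
  simp [comb, leftAssoc, List.replicate_succ', List.foldl_append]

theorem isTopOf_comb : ∀ (k : ℕ) (u : BTree), IsTopOf (comb k) u ↔ ∀ a ∈ u.ld.head?, k ≤ a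
  | 0, u => by simp [comb_zero, IsTopOf]
  | k + 1, .leaf => by simp [comb_succ, IsTopOf, ld_leaf]
  | k + 1, .node l r => by
      have h := valid_ld l
      have ih := isTopOf_comb k l
      rw [comb_succ, ld_node]
      simp only [IsTopOf, and_true]
      rw [ih]
      cases hl : l.ld with
      | nil => rw [hl] at h; exact h.elim
      | cons a s => simp

theorem avL_append (k d : ℕ) : ∀ (l : List ℕ) (b : ℕ) (r : List ℕ), Valid l →
    (AvL k (d + 1) (l.map (· + 1) ++ b :: r) ↔
      (d = 0 → b < k) ∧ AvL k (d - 1 + 1) l ∧ AvL k (d + 1) (b :: r))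
  | [], _, _, h => h.elim
  | [a], b, r, h => by
      simp only [Valid] at h
      subst h
      simp only [List.map_cons, List.map_nil, List.cons_append, List.nil_append, AvL, true_and]
      refine and_congr ?_ Iff.rfl
      constructor
      · intro h h0
        have := h (by omega)
        omega
      · intro h h0
        have := h (by omega)
        omega
  | a :: c :: l, b, r, h => by
      have ih := avL_append k d (c :: l) b r h.2.2
      have h1 := h.1
      simp only [List.map_cons, List.cons_append, AvL] at ih ⊢
      rw [ih]
      have : (d + 1 ≤ a + 1 → c + 1 + 1 < a + 1 + k) ↔ (d - 1 + 1 ≤ a → c + 1 < a + k) := by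
        constructor
        · intro h h0
          have := h (by omega)
          omega
        · intro h h0
          have := h (by omega)
          omega
      rw [this]
      tauto

/-- Avoidance of combs at all left depths at least `e`. -/
def AvT (k e : ℕ) (t : BTree) : Prop := ∀ δ, e ≤ δ → AvoidsAt t (comb1 k) δ

theorem avT_iff (k e : ℕ) (t : BTree) : AvT k e t ↔
    ∀ p u, subtreeAt t p = some u → e ≤ p.count Dir.L → ¬ IsTopOf (comb1 k) u := by
  constructor
  · intro h p u h1 h2 h3
    exact h _ h2 ⟨p, u, h1, rfl, h3⟩
  · rintro h δ hδ ⟨p, u, h1, h2, h3⟩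
    exact h p u h1 (by omega) h3

theorem avT_leaf (k e : ℕ) : AvT k e .leaf := by
  rw [avT_iff]
  intro p u h1 h2 h3
  cases p with
  | nil =>
    simp only [subtreeAt, Option.some.injEq] at h1
    subst h1
    exact h3
  | cons a p => simp [subtreeAt] at h1

theorem avT_node (k e : ℕ) (l r : BTree) : AvT k e (.node l r) ↔
    (e = 0 → ¬ IsTopOf (comb k) r) ∧ AvT k (e - 1) l ∧ AvT k e r := by
  simp only [avT_iff]
  constructor
  · intro h
    refine ⟨?_, ?_, ?_⟩
    · intro h0 h1
      exact h [] _ rfl (by simp [h0]) (by simp [comb1, IsTopOf, h1])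
    · intro p u h1 h2
      exact h (Dir.L :: p) u h1 (by simp; omega)
    · intro p u h1 h2
      exact h (Dir.R :: p) u h1 (by simpa using h2)
  · rintro ⟨h1, h2, h3⟩ p u hp hc
    match p, hp, hc with
    | [], hp, hc =>
      simp only [subtreeAt, Option.some.injEq] at hp
      subst hp
      simp at hc
      simpa [comb1, IsTopOf] using h1 hc
    | Dir.L :: p, hp, hc => exact h2 p u hp (by simp at hc; omega)
    | Dir.R :: p, hp, hc => exact h3 p u hp (by simpa using hc)

theorem avT_iff_avL (k : ℕ) : ∀ (t : BTree) (e : ℕ), AvT k e t ↔ AvL k (e + 1) t.ld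
  | .leaf, e => by
      rw [ld_leaf]
      exact ⟨fun _ => trivial, fun _ => avT_leaf k e⟩
  | .node l r, e => by
      rw [avT_node, ld_node, avT_iff_avL k l, avT_iff_avL k r, isTopOf_comb]
      have h := valid_ld r
      cases hr : r.ld with
      | nil => rw [hr] at h; exact h.elim
      | cons b s =>
        rw [avL_append k e _ b s (valid_ld l)]
        simp

/-! ### Dyck words -/

/-- Heights before the down steps, followed by the final height. -/
def dec : ℕ → List Step → List ℕ
  | h, [] => [h]
  | h, Step.U :: w => dec (h + 1) w
  | h, Step.D :: w => h :: dec (h - 1) w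

/-- Dyck suffixes starting at height `h`. -/
def IsD : ℕ → List Step → Prop
  | h, [] => h = 0
  | h, Step.U :: w => IsD (h + 1) w
  | h, Step.D :: w => 1 ≤ h ∧ IsD (h - 1) w

theorem dec_head : ∀ (w : List Step) (h : ℕ), ∃ b s, dec h w = b :: s ∧ h ≤ b ∧
    ∀ k, (∃ v, w = List.replicate k Step.U ++ v) ↔ h + k ≤ b
  | [], h => by
      refine ⟨h, [], rfl, le_rfl, ?_⟩
      intro k
      cases k with
      | zero => simp
      | succ k => simp [List.replicate_succ]
  | Step.U :: w, h => by
      obtain ⟨b, s, h1, h2, h3⟩ := dec_head w (h + 1)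
      refine ⟨b, s, h1, by omega, ?_⟩
      intro k
      cases k with
      | zero => simp; omega
      | succ k =>
        have := h3 k
        simp only [List.replicate_succ, List.cons_append, List.cons.injEq, true_and]
        rw [this]
        omega
  | Step.D :: w, h => by
      refine ⟨h, _, rfl, le_rfl, ?_⟩
      intro k
      cases k with
      | zero => simp
      | succ k => simp [List.replicate_succ]

theorem dec_length : ∀ (w : List Step) (h : ℕ), (dec h w).length = w.count Step.D + 1
  | [], h => rfl
  | Step.U :: w, h => by simp [dec, dec_length w]
  | Step.D :: w, h => by simp [dec, dec_length w]

theorem dec_valid : ∀ (w : List Step) (h : ℕ), IsD h w → Valid (dec h w)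
  | [], h, hw => hw
  | Step.U :: w, h, hw => dec_valid w (h + 1) hw
  | Step.D :: w, h, hw => by
      have ih := dec_valid w (h - 1) hw.2
      have h1 := hw.1
      obtain ⟨b, s, h2, h3, -⟩ := dec_head w (h - 1)
      rw [dec, h2]
      rw [h2] at ih
      exact ⟨h1, by omega, ih⟩

theorem dec_ne_nil (h : ℕ) (w : List Step) : dec h w ≠ [] := by
  obtain ⟨b, s, h2, -⟩ := dec_head w h
  simp [h2]

theorem dec_inj : ∀ (w w' : List Step) (h : ℕ), dec h w = dec h w' → w = w'
  | [], [], _, _ => rfl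
  | Step.U :: w, Step.U :: w', h, e => by rw [dec_inj w w' (h + 1) e]
  | Step.D :: w, Step.D :: w', h, e => by
      simp only [dec, List.cons.injEq, true_and] at e
      rw [dec_inj w w' (h - 1) e]
  | [], Step.U :: w, h, e => by
      obtain ⟨b, s, h2, h3, -⟩ := dec_head w (h + 1)
      simp [dec, h2] at e
      omega
  | Step.U :: w, [], h, e => by
      obtain ⟨b, s, h2, h3, -⟩ := dec_head w (h + 1)
      simp [dec, h2] at e
      omega
  | Step.D :: w', Step.U :: w, h, e => by
      obtain ⟨b, s, h2, h3, -⟩ := dec_head w (h + 1)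
      simp [dec, h2] at e
      omega
  | Step.U :: w, Step.D :: w', h, e => by
      obtain ⟨b, s, h2, h3, -⟩ := dec_head w (h + 1)
      simp [dec, h2] at e
      omega
  | [], Step.D :: w, h, e => by
      simp only [dec, List.cons.injEq, true_and] at e
      exact (dec_ne_nil _ _ e.symm).elim
  | Step.D :: w, [], h, e => by
      simp only [dec, List.cons.injEq, true_and] at e
      exact (dec_ne_nil _ _ e).elim

theorem dec_replicate : ∀ (m h : ℕ) (w : List Step),
    dec h (List.replicate m Step.U ++ w) = dec (h + m) w
  | 0, h, w => by simp
  | m + 1, h, w => by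
      rw [List.replicate_succ, List.cons_append, dec, dec_replicate m]
      congr 1
      omega

theorem isD_replicate : ∀ (m h : ℕ) (w : List Step),
    IsD h (List.replicate m Step.U ++ w) ↔ IsD (h + m) w
  | 0, h, w => by simp
  | m + 1, h, w => by
      rw [List.replicate_succ, List.cons_append, IsD, isD_replicate m,
        show h + 1 + m = h + (m + 1) by omega]

theorem dec_surj : ∀ (a : ℕ) (s : List ℕ) (h : ℕ), Valid (a :: s) → h ≤ a →
    ∃ w, IsD h w ∧ dec h w = a :: s
  | a, [], h, hv, hh => by
      simp only [Valid] at hv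
      subst hv
      have : h = 0 := by omega
      subst this
      exact ⟨[], rfl, rfl⟩
  | a, b :: s, h, hv, hh => by
      have h1 := hv.1
      have h2 := hv.2.1
      obtain ⟨w, hw, e⟩ := dec_surj b s (a - 1) hv.2.2 (by omega)
      refine ⟨List.replicate (a - h) Step.U ++ Step.D :: w, ?_, ?_⟩
      · rw [isD_replicate, show h + (a - h) = a by omega]
        exact ⟨h1, hw⟩
      · rw [dec_replicate, show h + (a - h) = a by omega, dec, e]

theorem isD_iff : ∀ (w : List Step) (h : ℕ), IsD h w ↔
    (w.count Step.U + h = w.count Step.D ∧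
      ∀ p : List Step, p <+: w → p.count Step.D ≤ p.count Step.U + h)
  | [], h => by simp [IsD]
  | Step.U :: w, h => by
      rw [IsD, isD_iff w]
      constructor
      · rintro ⟨h1, h2⟩
        refine ⟨by simp; omega, ?_⟩
        intro p hp
        rcases List.prefix_cons_iff.1 hp with rfl | ⟨q, rfl, hq⟩
        · simp
        · have := h2 q hq
          simp
          omega
      · rintro ⟨h1, h2⟩
        refine ⟨by simp at h1; omega, ?_⟩
        intro p hp
        have := h2 (Step.U :: p) ((List.prefix_cons_inj _).2 hp)
        simp at this
        omega
  | Step.D :: w, h => by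
      rw [IsD, isD_iff w]
      constructor
      · rintro ⟨h0, h1, h2⟩
        refine ⟨by simp; omega, ?_⟩
        intro p hp
        rcases List.prefix_cons_iff.1 hp with rfl | ⟨q, rfl, hq⟩
        · simp
        · have := h2 q hq
          simp
          omega
      · rintro ⟨h1, h2⟩
        have h0 : 1 ≤ h := by
          have := h2 [Step.D] (by simp)
          simpa using this
        refine ⟨h0, by simp at h1; omega, ?_⟩
        intro p hp
        have := h2 (Step.D :: p) ((List.prefix_cons_inj _).2 hp)
        simp at this
        omega

theorem isDyck_iff (n : ℕ) (w : List Step) : IsDyck n w ↔ IsD 0 w ∧ (dec 0 w).length = n + 1 := by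
  rw [isD_iff, dec_length, IsDyck]
  simp only [Nat.add_zero]
  constructor
  · rintro ⟨h1, h2, h3⟩
    exact ⟨⟨by omega, h3⟩, by omega⟩
  · rintro ⟨⟨h1, h3⟩, h2⟩
    exact ⟨by omega, by omega, h3⟩

theorem avoids_iff (k d : ℕ) : ∀ (w : List Step) (h : ℕ), IsD h w →
    ((∀ l₁ l₂ : List Step, w = l₁ ++ Step.D :: (List.replicate k Step.U ++ l₂) →
      (l₁.count Step.U : ℤ) - (l₁.count Step.D : ℤ) + h < (d : ℤ)) ↔ AvL k d (dec h w))
  | [], h, _ => by simp [dec, AvL]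
  | Step.U :: w, h, hw => by
      rw [dec, ← avoids_iff k d w (h + 1) hw]
      constructor
      · intro H l₁ l₂ e
        have := H (Step.U :: l₁) l₂ (by rw [e]; rfl)
        simp at this
        push_cast
        omega
      · intro H l₁ l₂ e
        cases l₁ with
        | nil => simp at e
        | cons x l₁ =>
          simp only [List.cons_append, List.cons.injEq] at e
          obtain ⟨rfl, e⟩ := e
          have := H l₁ l₂ e
          simp
          push_cast at this
          omega
  | Step.D :: w, h, hw => by
      have ih := avoids_iff k d w (h - 1) hw.2
      have h1 := hw.1
      obtain ⟨b, s, h2, h3, h4⟩ := dec_head w (h - 1)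
      have h4 := h4 k
      rw [dec, h2, AvL, ← h2, ← ih]
      constructor
      · intro H
        constructor
        · intro hd
          by_contra hb
          obtain ⟨v, hv⟩ := h4.2 (by omega)
          have := H [] v (by rw [hv]; rfl)
          simp at this
          omega
        · intro l₁ l₂ e
          have := H (Step.D :: l₁) l₂ (by rw [e]; rfl)
          simp at this
          omega
      · rintro ⟨H0, H⟩ l₁ l₂ e
        cases l₁ with
        | nil =>
          simp only [List.nil_append, List.cons.injEq, true_and] at e
          have := h4.1 ⟨l₂, e⟩
          simp
          by_contra hc
          have := H0 (by omega)
          omega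
        | cons x l₁ =>
          simp only [List.cons_append, List.cons.injEq] at e
          obtain ⟨rfl, e⟩ := e
          have := H l₁ l₂ e
          simp
          omega

/-! ### Canonical representatives -/

/-- The entrywise relation. -/
def R (d k a b : ℕ) : Prop := a % k = b % k ∧ (min a b < d → a = b)

theorem dkRel_iff_aux (d k : ℕ) : ∀ (b c : List ℕ),
    (ModListEq k b c ∧ DepthEq d b c) ↔ List.Forall₂ (R d k) b c
  | [], [] => by simp [ModListEq, DepthEq]
  | [], _ :: _ => by simp [ModListEq, DepthEq]
  | _ :: _, [] => by simp [ModListEq, DepthEq]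
  | a :: b, a' :: b' => by
      have ih := dkRel_iff_aux d k b b'
      simp only [ModListEq, DepthEq, List.forall₂_cons] at ih ⊢
      rw [← ih, R]
      tauto

theorem dkRel_iff (d k : ℕ) (t t' : BTree) :
    DkRel d k t t' ↔ List.Forall₂ (R d k) t.ld t'.ld := dkRel_iff_aux d k _ _

theorem R_equiv (d k : ℕ) : Equivalence (R d k) := by
  refine ⟨fun a => ⟨rfl, fun _ => rfl⟩, ?_, ?_⟩
  · rintro a b ⟨h1, h2⟩
    exact ⟨h1.symm, fun h => (h2 (by omega)).symm⟩
  · rintro a b c ⟨h1, h2⟩ ⟨h3, h4⟩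
    refine ⟨h1.trans h3, fun h => ?_⟩
    by_cases hb : b < d
    · exact (h2 (by omega)).trans (h4 (by omega))
    · by_cases ha : a < d
      · exact (h2 (by omega)).trans (h4 (by have := h2 (by omega); omega))
      · have := h4 (by omega)
        omega

theorem forall₂_trans {r : ℕ → ℕ → Prop} (hr : ∀ a b c, r a b → r b c → r a c) :
    ∀ {a b c : List ℕ}, List.Forall₂ r a b → List.Forall₂ r b c → List.Forall₂ r a c
  | _, _, _, .nil, .nil => .nil
  | _, _, _, .cons h t, .cons h' t' => .cons (hr _ _ _ h h') (forall₂_trans hr t t')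

theorem forall₂_symm {r : ℕ → ℕ → Prop} (hr : ∀ a b, r a b → r b a) :
    ∀ {a b : List ℕ}, List.Forall₂ r a b → List.Forall₂ r b a
  | _, _, .nil => .nil
  | _, _, .cons h t => .cons (hr _ _ h) (forall₂_symm hr t)

theorem dkRel_equiv (d k n : ℕ) : Equivalence (fun t t' : Tn n => DkRel d k t.1 t'.1) := by
  simp only [dkRel_iff]
  refine ⟨fun a => ?_, fun h => ?_, fun h h' => ?_⟩
  · exact List.forall₂_same.2 fun _ _ => (R_equiv d k).refl _
  · exact forall₂_symm (fun _ _ => (R_equiv d k).symm) h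
  · exact forall₂_trans (r := R d k) (fun _ _ _ h1 h2 => (R_equiv d k).trans h1 h2) h h'

theorem canon_unique (d k : ℕ) : ∀ b c : List ℕ, Valid b → Valid c →
    AvL k d b → AvL k d c → List.Forall₂ (R d k) b c → b = c
  | [], _, h, _, _, _, _ => h.elim
  | _ :: _, [], _, h, _, _, _ => h.elim
  | [a], [a'], h, h', _, _, _ => by
      simp only [Valid] at h h'
      rw [h, h']
  | [a], _ :: _ :: _, _, _, _, _, hr => by simp at hr
  | _ :: _ :: _, [a], _, _, _, _, hr => by simp at hr
  | a :: b :: r, a' :: b' :: r', h, h', hA, hA', hr => by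
      obtain ⟨hr0, hr1⟩ := List.forall₂_cons.1 hr
      have ih := canon_unique d k (b :: r) (b' :: r') h.2.2 h'.2.2 hA.2 hA'.2 hr1
      rw [ih]
      congr 1
      have hb : b = b' := (List.cons.inj ih).1
      subst hb
      by_cases hm : min a a' < d
      · exact hr0.2 hm
      · have h1 := hA.1 (by omega)
        have h2 := hA'.1 (by omega)
        have h3 := h.2.1
        have h4 := h'.2.1
        have hmod : a ≡ a' [MOD k] := hr0.1
        rcases le_total a a' with hle | hle
        · have := (Nat.modEq_iff_dvd' hle).1 hmod
          have := Nat.eq_zero_of_dvd_of_lt this (by omega)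
          omega
        · have := (Nat.modEq_iff_dvd' hle).1 hmod.symm
          have := Nat.eq_zero_of_dvd_of_lt this (by omega)
          omega

theorem exists_step (k a x : ℕ) (hk : 1 ≤ k) (hx : a ≤ x) :
    ∃ c, a ≤ c ∧ c ≤ x ∧ x < c + k ∧ a % k = c % k := by
  have h1 := Nat.mod_lt (x - a) hk
  have h2 := Nat.mod_add_div (x - a) k
  refine ⟨a + k * ((x - a) / k), by omega, by omega, by omega, ?_⟩
  simp

theorem canon_exists (d k : ℕ) (hk : 1 ≤ k) : ∀ (a : ℕ) (s : List ℕ), Valid (a :: s) →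
    ∃ c r, Valid (c :: r) ∧ AvL k d (c :: r) ∧ List.Forall₂ (R d k) (a :: s) (c :: r) ∧ a ≤ c
  | a, [], h => ⟨a, [], h, trivial, List.forall₂_same.2 fun _ _ => (R_equiv d k).refl _, le_rfl⟩
  | a, b :: s, h => by
      obtain ⟨c, r, h1, h2, h3, h4⟩ := canon_exists d k hk b s h.2.2
      have ha := h.1
      have hb := h.2.1
      by_cases hd : a < d
      · exact ⟨a, c :: r, ⟨ha, by omega, h1⟩, ⟨fun _ => by omega, h2⟩,
          .cons ((R_equiv d k).refl _) h3, le_rfl⟩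
      · obtain ⟨x, hx1, hx2, hx3, hx4⟩ := exists_step k a (c + 1) hk (by omega)
        exact ⟨x, c :: r, ⟨by omega, by omega, h1⟩, ⟨fun _ => by omega, h2⟩,
          .cons ⟨hx4, fun _ => by omega⟩ h3, hx1⟩

/-- Canonical sequences. -/
def Can (k d n : ℕ) : Type := {L : List ℕ // L.length = n + 1 ∧ Valid L ∧ AvL k d L}

theorem card_trees (k d n : ℕ) (hd : 1 ≤ d) :
    Nat.card {t : BTree // t.numLeaves = n + 1 ∧
        ∀ δ, d - 1 ≤ δ → AvoidsAt t (comb1 k) δ} = Nat.card (Can k d n) := by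
  have key : ∀ t : BTree, (∀ δ, d - 1 ≤ δ → AvoidsAt t (comb1 k) δ) ↔ AvL k d t.ld := by
    intro t
    have := avT_iff_avL k t (d - 1)
    rwa [Nat.sub_add_cancel hd] at this
  refine Nat.card_congr (Equiv.ofBijective
    (fun t => (⟨t.1.ld, by rw [length_ld]; exact t.2.1, valid_ld _, (key _).1 t.2.2⟩ :
      Can k d n)) ⟨?_, ?_⟩)
  · intro t t' h
    exact Subtype.ext (ld_injective _ _ (congrArg Subtype.val h))
  · rintro ⟨L, h1, h2, h3⟩
    obtain ⟨t, rfl⟩ := ld_surj _ L le_rfl h2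
    exact ⟨⟨t, by rw [← length_ld]; exact h1, (key t).2 h3⟩, rfl⟩

theorem card_dyck (k d n : ℕ) :
    Nat.card {w : List Step // IsDyck n w ∧ AvoidsDUk k d w} = Nat.card (Can k d n) := by
  have key : ∀ w : List Step, IsD 0 w → (AvoidsDUk k d w ↔ AvL k d (dec 0 w)) := by
    intro w hw
    rw [← avoids_iff k d w 0 hw]
    simp [AvoidsDUk]
  refine Nat.card_congr (Equiv.ofBijective
    (fun w => (⟨dec 0 w.1, ((isDyck_iff n _).1 w.2.1).2, dec_valid _ _ ((isDyck_iff n _).1 w.2.1).1,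
      (key _ ((isDyck_iff n _).1 w.2.1).1).1 w.2.2⟩ : Can k d n)) ⟨?_, ?_⟩)
  · intro t t' h
    exact Subtype.ext (dec_inj _ _ 0 (congrArg Subtype.val h))
  · rintro ⟨L, h1, h2, h3⟩
    cases L with
    | nil => exact h2.elim
    | cons a s =>
      obtain ⟨w, hw, e⟩ := dec_surj a s 0 h2 (Nat.zero_le _)
      exact ⟨⟨w, (isDyck_iff n w).2 ⟨hw, by rw [e]; exact h1⟩, (key w hw).2 (by rw [e]; exact h3)⟩,
        Subtype.ext e⟩

theorem card_classes (k d n : ℕ) (hk : 1 ≤ k) : Cdk d k n = Nat.card (Can k d n) := by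
  have tree : ∀ L : Can k d n, ∃ t : Tn n, t.1.ld = L.1 := by
    rintro ⟨L, h1, h2, h3⟩
    obtain ⟨t, rfl⟩ := ld_surj _ L le_rfl h2
    exact ⟨⟨t, by rw [← length_ld]; exact h1⟩, rfl⟩
  choose f hf using tree
  refine (Nat.card_congr (Equiv.ofBijective
    (fun L : Can k d n => Quot.mk (fun t t' : Tn n => DkRel d k t.1 t'.1) (f L)) ⟨?_, ?_⟩)).symm
  · intro L L' h
    have h' := (dkRel_equiv d k n).eqvGen_iff.1 (Quot.eqvGen_exact h)
    rw [dkRel_iff, hf, hf] at h'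
    exact Subtype.ext (canon_unique d k _ _ L.2.2.1 L'.2.2.1 L.2.2.2 L'.2.2.2 h')
  · intro q
    induction q using Quot.ind with
    | mk t =>
      have hv := valid_ld t.1
      cases hl : t.1.ld with
      | nil => rw [hl] at hv; exact hv.elim
      | cons a s =>
        rw [hl] at hv
        obtain ⟨c, r, h1, h2, h3, -⟩ := canon_exists d k hk a s hv
        have hlen : (c :: r).length = n + 1 := by
          rw [← h3.length_eq, ← hl, length_ld]
          exact t.2
        let L : Can k d n := ⟨c :: r, hlen, h1, h2⟩
        have hL : (f L).1.ld = c :: r := hf L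
        refine ⟨L, Quot.sound ?_⟩
        rw [dkRel_iff, hL, hl]
        exact forall₂_symm (fun _ _ => (R_equiv d k).symm) h3

/-- for `k,d ≥ 1` and `n ≥ 0`, `C^d_{k,n}` equals both the number of binary
trees with `n` internal nodes (i.e. `n+1` leaves) avoiding `comb_k^1` at every left depth
at least `d-1`, and the number of Dyck paths of length `2n` avoiding `DU^k` at every
height at least `d`. -/
theorem stmt13 (k d n : ℕ) (hk : 1 ≤ k) (hd : 1 ≤ d) :
    Cdk d k n =
      Nat.card {t : BTree // t.numLeaves = n + 1 ∧
        ∀ δ, d - 1 ≤ δ → AvoidsAt t (comb1 k) δ} ∧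
    Cdk d k n = Nat.card {w : List Step // IsDyck n w ∧ AvoidsDUk k d w} := by
  exact ⟨(card_classes k d n hk).trans (card_trees k d n hd).symm,
    (card_classes k d n hk).trans (card_dyck k d n).symm⟩
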